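/- arXiv:2304.04900 — 3 statements merged into one kernel-verified Lean document; each statement's English description precedes it below -/
import Mathlib

section
/- There exists an absolute constant C > 0 such that for every finite set P of N points in the real plane ℝ² and every finite set L of M lines in ℝ², the number of incidences, i.e. pairs (p, ℓ) ∈ P × L with p ∈ ℓ, is at most C·(N^{2/3}·M^{2/3} + N + M). -/
/-!
Székely's argument. After a shear the points have distinct abscissae. Join consecutive points on
each line by a segment: there are at least as many segments as incidences, up to one per line, and
at most `|L|²` of the ordered pairs of segments cross, since two distinct lines meet at most once.
The crossing lemma for straight-line graphs then bounds the number of segments.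

The crossing lemma starts from the bound `3 |V|` for the number of edges of a straight-line graph
without crossings, which needs no Euler formula. Charge an edge `e` to its left endpoint if it is
the steepest edge leaving it to the right. Otherwise let `f` be the next steeper edge leaving that
endpoint and `v` the leftmost vertex of the wedge between `e` and `f`. On the vertical line
through `v` no edge lies strictly between `e` and `f`, so either `e` is the first edge below `v`,
or `v` is the right endpoint of `e` and `f` is the first edge above it; both determine `e` from
`v`. Deleting one edge per crossing gives `|E| ≤ 3 |V| + cr(E)`, and applying this to a random set
of vertices, each kept with probability `4 |V| / |E|`, amplifies it to `|E|³ ≤ 64 |V|² cr(E)`.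
-/

/-- A line in `ℝ²` is an affine line, i.e. a set of the form
`{(x, y) : a·x + b·y = c}` with `(a, b) ≠ (0, 0)`. -/
def IsLine (L : Set (ℝ × ℝ)) : Prop :=
  ∃ a b c : ℝ, (a, b) ≠ (0, 0) ∧ L = {p : ℝ × ℝ | a * p.1 + b * p.2 = c}

open scoped Finset

section Sampling

variable {R α β γ : Type*} [CommRing R]

/-- The expectation of `f S`, where the random subset `S` of `V` contains each element of `V`
independently with probability `p`. -/
def sampleMean (p : R) (V : Finset α) (f : Finset α → R) : R :=
  ∑ S ∈ V.powerset, p ^ #S * (1 - p) ^ (#V - #S) * f S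

lemma sampleMean_mono [LinearOrder R] [IsStrictOrderedRing R] {p : R} (hp₀ : 0 ≤ p) (hp₁ : p ≤ 1)
    {V : Finset α} {f g : Finset α → R} (hfg : ∀ S ⊆ V, f S ≤ g S) :
    sampleMean p V f ≤ sampleMean p V g :=
  Finset.sum_le_sum fun S hS ↦ mul_le_mul_of_nonneg_left (hfg S (Finset.mem_powerset.1 hS))
    (mul_nonneg (pow_nonneg hp₀ _) (pow_nonneg (sub_nonneg.2 hp₁) _))

lemma sampleMean_add (p : R) (V : Finset α) (f g : Finset α → R) :
    sampleMean p V (fun S ↦ f S + g S) = sampleMean p V f + sampleMean p V g := by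
  simp only [sampleMean, mul_add, Finset.sum_add_distrib]

lemma sampleMean_const_mul (p : R) (V : Finset α) (c : R) (f : Finset α → R) :
    sampleMean p V (fun S ↦ c * f S) = c * sampleMean p V f := by
  simp only [sampleMean, Finset.mul_sum, mul_left_comm]

lemma sampleMean_sum (p : R) (V : Finset α) (B : Finset β) (f : β → Finset α → R) :
    sampleMean p V (fun S ↦ ∑ b ∈ B, f b S) = ∑ b ∈ B, sampleMean p V (f b) := by
  simp only [sampleMean, Finset.mul_sum]
  exact Finset.sum_comm

variable [DecidableEq α]

lemma sampleMean_ite_subset (p : R) {V T : Finset α} (hT : T ⊆ V) :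
    sampleMean p V (fun S ↦ if T ⊆ S then 1 else 0) = p ^ #T := by
  have hIcc : {S ∈ V.powerset | T ⊆ S} = Finset.Icc T V := by
    ext S
    simp only [Finset.mem_filter, Finset.mem_powerset, Finset.mem_Icc, and_comm]
  have hdisj : ∀ U ∈ (V \ T).powerset, Disjoint T U := fun U hU ↦
    Finset.disjoint_sdiff.mono_right (Finset.mem_powerset.1 hU)
  have hinj : Set.InjOn (T ∪ ·) ((V \ T).powerset : Set (Finset α)) := fun U hU U' hU' h ↦ by
    rw [← Finset.union_sdiff_cancel_left (hdisj U hU),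
      ← Finset.union_sdiff_cancel_left (hdisj U' hU'), show T ∪ U = T ∪ U' from h]
  have hcard := Finset.card_sdiff_add_card_eq_card hT
  calc sampleMean p V (fun S ↦ if T ⊆ S then 1 else 0)
      = ∑ S ∈ Finset.Icc T V, p ^ #S * (1 - p) ^ (#V - #S) := by
        simp only [sampleMean, mul_ite, mul_one, mul_zero, ← Finset.sum_filter, hIcc]
    _ = ∑ U ∈ (V \ T).powerset, p ^ #(T ∪ U) * (1 - p) ^ (#V - #(T ∪ U)) := by
        rw [Finset.Icc_eq_image_powerset hT, Finset.sum_image hinj]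
    _ = ∑ U ∈ (V \ T).powerset, p ^ #T * (p ^ #U * (1 - p) ^ (#(V \ T) - #U)) := by
        refine Finset.sum_congr rfl fun U hU ↦ ?_
        rw [Finset.card_union_of_disjoint (hdisj U hU), pow_add, mul_assoc,
          show #V - (#T + #U) = #(V \ T) - #U by omega]
    _ = p ^ #T := by
        rw [← Finset.mul_sum, Finset.sum_pow_mul_eq_add_pow, add_sub_cancel, one_pow, mul_one]

lemma sampleMean_card_filter_subset (p : R) {V : Finset α} {B : Finset β} {T : β → Finset α}
    {j : ℕ} (hT : ∀ b ∈ B, T b ⊆ V ∧ #(T b) = j) :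
    sampleMean p V (fun S ↦ (#{b ∈ B | T b ⊆ S} : R)) = #B * p ^ j := by
  simp only [Finset.card_filter, Nat.cast_sum, Nat.cast_ite, Nat.cast_one, Nat.cast_zero,
    sampleMean_sum]
  rw [Finset.sum_congr rfl fun b hb ↦ by rw [sampleMean_ite_subset p (hT b hb).1, (hT b hb).2],
    Finset.sum_const, nsmul_eq_mul]

lemma card_mul_pow_le_of_forall_subset [LinearOrder R] [IsStrictOrderedRing R] {p : R}
    (hp₀ : 0 ≤ p) (hp₁ : p ≤ 1) {V : Finset α} {E : Finset β} {X : Finset γ}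
    {s : β → Finset α} {t : γ → Finset α} {i j c : ℕ}
    (hs : ∀ e ∈ E, s e ⊆ V ∧ #(s e) = i) (ht : ∀ x ∈ X, t x ⊆ V ∧ #(t x) = j)
    (h : ∀ S ⊆ V, #{e ∈ E | s e ⊆ S} ≤ c * #S + #{x ∈ X | t x ⊆ S}) :
    (#E : R) * p ^ i ≤ c * (#V * p) + #X * p ^ j := by
  have hV : ∀ S ⊆ V, {v ∈ V | {v} ⊆ S} = S := fun S hS ↦ by
    simpa only [Finset.singleton_subset_iff, Finset.filter_mem_eq_inter] using
      Finset.inter_eq_right.2 hS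
  calc (#E : R) * p ^ i
      = sampleMean p V (fun S ↦ (#{e ∈ E | s e ⊆ S} : R)) :=
        (sampleMean_card_filter_subset p hs).symm
    _ ≤ sampleMean p V (fun S ↦ c * (#{v ∈ V | {v} ⊆ S} : R) + (#{x ∈ X | t x ⊆ S} : R)) :=
        sampleMean_mono hp₀ hp₁ fun S hS ↦ by rw [hV S hS]; exact_mod_cast h S hS
    _ = c * (#V * p) + #X * p ^ j := by
        rw [sampleMean_add, sampleMean_const_mul, sampleMean_card_filter_subset p ht,
          sampleMean_card_filter_subset (j := 1) p fun v hv ↦ by simpa using hv, pow_one]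

end Sampling

section StraightLineGraphs

variable {K : Type*} [Field K] [LinearOrder K]

/-- A nonvertical segment in the plane over `K`, with its endpoints listed from left to right. -/
@[ext]
structure PlaneSegment (K : Type*) [LinearOrder K] where
  left : K × K
  right : K × K
  left_lt_right : left.1 < right.1

namespace PlaneSegment

/-- The projection of a closed segment to the horizontal axis. -/
abbrev shadow (e : PlaneSegment K) : Set K := Set.Icc e.left.1 e.right.1

/-- The projection of the relative interior of a segment to the horizontal axis. -/
abbrev openShadow (e : PlaneSegment K) : Set K := Set.Ioo e.left.1 e.right.1

/-- The slope of the line spanned by a segment. -/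
def slope (e : PlaneSegment K) : K := (e.right.2 - e.left.2) / (e.right.1 - e.left.1)

/-- The ordinate at abscissa `x` of the line spanned by a segment; `x` may lie outside the shadow
of the segment. -/
def height (e : PlaneSegment K) (x : K) : K := e.left.2 + e.slope * (x - e.left.1)

/-- Two segments cross if their relative interiors meet. In particular a segment crosses itself. -/
def Crosses (e f : PlaneSegment K) : Prop :=
  ∃ x ∈ e.openShadow ∩ f.openShadow, e.height x = f.height x

variable {e f : PlaneSegment K} {x y : K}

lemma height_left (e : PlaneSegment K) : e.height e.left.1 = e.left.2 := by simp [height]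

variable [IsStrictOrderedRing K]

lemma height_right (e : PlaneSegment K) : e.height e.right.1 = e.right.2 := by
  rw [height, slope, div_mul_cancel₀ _ (sub_pos.2 e.left_lt_right).ne', add_sub_cancel]

lemma height_eq_of_eq_of_eq (hxy : x ≠ y) (hx : e.height x = f.height x)
    (hy : e.height y = f.height y) : e.height = f.height := by
  have hslope : e.slope = f.slope := by
    refine mul_right_cancel₀ (sub_ne_zero.2 hxy) ?_
    simp only [height] at hx hy
    linear_combination hx - hy
  funext z
  simp only [height] at hx ⊢
  linear_combination hx + (z - x) * hslope

lemma height_lt_height_iff_slope_lt_slope (h : e.left = f.left) (hx : e.left.1 < x) :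
    e.height x < f.height x ↔ e.slope < f.slope := by
  rw [height, height, h, add_lt_add_iff_left, mul_lt_mul_iff_left₀ (sub_pos.2 (h ▸ hx))]

lemma height_le_height_of_not_crosses (hef : ¬ e.Crosses f) (hx : x ∈ e.shadow ∩ f.shadow)
    (hy : y ∈ e.shadow ∩ f.shadow) (hlt : e.height x < f.height x) :
    e.height y ≤ f.height y := by
  by_contra! hgt
  have hxy : x ≠ y := by rintro rfl; exact hlt.asymm hgt
  have hab : f.height x - e.height x + (e.height y - f.height y) ≠ 0 := by linarith
  -- The abscissa of the intersection, by linear interpolation of `f.height - e.height`.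
  obtain ⟨z, hz, hzeq⟩ : ∃ z ∈ openSegment K x y, e.height z = f.height z := by
    refine ⟨_, ⟨(e.height y - f.height y) / (f.height x - e.height x + (e.height y - f.height y)),
      (f.height x - e.height x) / (f.height x - e.height x + (e.height y - f.height y)),
      div_pos (by linarith) (by linarith), div_pos (by linarith) (by linarith), ?_, rfl⟩, ?_⟩
    · field_simp
      ring
    · simp only [height, smul_eq_mul] at hab ⊢
      field_simp
      ring
  rw [openSegment_eq_Ioo' hxy] at hz
  exact hef ⟨z, ⟨⟨(le_min hx.1.1 hy.1.1).trans_lt hz.1, hz.2.trans_le (max_le hx.1.2 hy.1.2)⟩,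
    (le_min hx.2.1 hy.2.1).trans_lt hz.1, hz.2.trans_le (max_le hx.2.2 hy.2.2)⟩, hzeq⟩

end PlaneSegment

/-- A straight-line graph with vertex set `V` and edge set `E`: the vertices have distinct
abscissae, and no edge passes through a vertex in its relative interior. Edges may cross. -/
structure StraightLineGraph (V : Finset (K × K)) (E : Finset (PlaneSegment K)) : Prop where
  injOn_fst : Set.InjOn Prod.fst (V : Set (K × K))
  left_mem : ∀ e ∈ E, e.left ∈ V
  right_mem : ∀ e ∈ E, e.right ∈ V
  height_ne : ∀ e ∈ E, ∀ v ∈ V, v.1 ∈ e.openShadow → e.height v.1 ≠ v.2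

open Classical in
/-- The ordered pairs of distinct crossing segments of `E`. -/
noncomputable def crossings (E : Finset (PlaneSegment K)) :
    Finset (PlaneSegment K × PlaneSegment K) :=
  {z ∈ E.offDiag | z.1.Crosses z.2}

lemma mem_crossings {E : Finset (PlaneSegment K)} {e f : PlaneSegment K} :
    (e, f) ∈ crossings E ↔ e ∈ E ∧ f ∈ E ∧ e ≠ f ∧ e.Crosses f := by
  simp only [crossings, Finset.mem_filter, Finset.mem_offDiag, and_assoc]

/-- `e` is the first segment of `E` met when descending vertically from `v`. -/
def IsFirstBelow (E : Finset (PlaneSegment K)) (e : PlaneSegment K) (v : K × K) : Prop :=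
  v.1 ∈ e.openShadow ∧ e.height v.1 < v.2 ∧
    ∀ h ∈ E, v.1 ∈ h.openShadow → h.height v.1 ∉ Set.Ioo (e.height v.1) v.2

/-- `e` is the first segment of `E` met when ascending vertically from `v`. -/
def IsFirstAbove (E : Finset (PlaneSegment K)) (e : PlaneSegment K) (v : K × K) : Prop :=
  v.1 ∈ e.openShadow ∧ v.2 < e.height v.1 ∧
    ∀ h ∈ E, v.1 ∈ h.openShadow → h.height v.1 ∉ Set.Ioo v.2 (e.height v.1)

section

variable {E : Finset (PlaneSegment K)} {e f : PlaneSegment K} {v : K × K}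

lemma IsFirstBelow.unique (hE : (E : Set (PlaneSegment K)).Pairwise fun e f ↦ ¬ e.Crosses f)
    (he : e ∈ E) (hf : f ∈ E) (hev : IsFirstBelow E e v) (hfv : IsFirstBelow E f v) : e = f :=
  hE.eq he hf <| not_not.2 ⟨v.1, ⟨hev.1, hfv.1⟩, le_antisymm
    (not_lt.1 fun h ↦ hfv.2.2 e he hev.1 ⟨h, hev.2.1⟩)
    (not_lt.1 fun h ↦ hev.2.2 f hf hfv.1 ⟨h, hfv.2.1⟩)⟩

lemma IsFirstAbove.unique (hE : (E : Set (PlaneSegment K)).Pairwise fun e f ↦ ¬ e.Crosses f)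
    (he : e ∈ E) (hf : f ∈ E) (hev : IsFirstAbove E e v) (hfv : IsFirstAbove E f v) : e = f :=
  hE.eq he hf <| not_not.2 ⟨v.1, ⟨hev.1, hfv.1⟩, le_antisymm
    (not_lt.1 fun h ↦ hev.2.2 f hf hfv.1 ⟨hfv.2.1, h⟩)
    (not_lt.1 fun h ↦ hfv.2.2 e he hev.1 ⟨hev.2.1, h⟩)⟩

end

/-- The points of `V` in the closed triangle cut out between `e` and `f` by the vertical line
through the nearer right endpoint, without its apex. It is used when `e` and `f` leave a common
left endpoint, `e` below `f`. -/
def wedge (V : Finset (K × K)) (e f : PlaneSegment K) : Finset (K × K) :=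
  {v ∈ V | e.left.1 < v.1 ∧ v.1 ≤ e.right.1 ∧ v.1 ≤ f.right.1 ∧
    v.2 ∈ Set.Icc (e.height v.1) (f.height v.1)}

namespace StraightLineGraph

variable {V : Finset (K × K)} {E : Finset (PlaneSegment K)} {e f h : PlaneSegment K}

lemma mono (G : StraightLineGraph V E) {S : Finset (K × K)} {F : Finset (PlaneSegment K)}
    (hS : S ⊆ V) (hF : F ⊆ E) (hends : ∀ e ∈ F, e.left ∈ S ∧ e.right ∈ S) :
    StraightLineGraph S F where
  injOn_fst := G.injOn_fst.mono hS
  left_mem e he := (hends e he).1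
  right_mem e he := (hends e he).2
  height_ne e he v hv := G.height_ne e (hF he) v (hS hv)

variable [IsStrictOrderedRing K]

lemma eq_of_height_eq (G : StraightLineGraph V E) (he : e ∈ E) (hf : f ∈ E)
    (hheight : e.height = f.height) {x : K} (hx : x ∈ e.openShadow ∩ f.openShadow) : e = f := by
  have hleft : ∀ {e f : PlaneSegment K}, e ∈ E → f ∈ E → e.height = f.height →
      x ∈ e.openShadow → x ∈ f.openShadow → e.left.1 ≤ f.left.1 :=
    fun {e f} he hf h hxe hxf ↦ not_lt.1 fun hlt ↦
      G.height_ne f hf e.left (G.left_mem e he) ⟨hlt, hxe.1.trans hxf.2⟩ (h ▸ e.height_left)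
  have hright : ∀ {e f : PlaneSegment K}, e ∈ E → f ∈ E → e.height = f.height →
      x ∈ e.openShadow → x ∈ f.openShadow → e.right.1 ≤ f.right.1 :=
    fun {e f} he hf h hxe hxf ↦ not_lt.1 fun hlt ↦
      G.height_ne e he f.right (G.right_mem f hf) ⟨hxe.1.trans hxf.2, hlt⟩ (h ▸ f.height_right)
  exact PlaneSegment.ext
    (G.injOn_fst (G.left_mem e he) (G.left_mem f hf)
      ((hleft he hf hheight hx.1 hx.2).antisymm (hleft hf he hheight.symm hx.2 hx.1)))
    (G.injOn_fst (G.right_mem e he) (G.right_mem f hf)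
      ((hright he hf hheight hx.1 hx.2).antisymm (hright hf he hheight.symm hx.2 hx.1)))

lemma eq_of_left_eq_of_slope_eq (G : StraightLineGraph V E) (he : e ∈ E) (hf : f ∈ E)
    (hleft : e.left = f.left) (hslope : e.slope = f.slope) : e = f := by
  obtain ⟨x, hx, hxmin⟩ :=
    exists_between (lt_min e.left_lt_right (hleft ▸ f.left_lt_right : e.left.1 < f.right.1))
  rw [lt_min_iff] at hxmin
  exact G.eq_of_height_eq he hf (funext fun z ↦ by simp only [PlaneSegment.height, hleft, hslope])
    ⟨⟨hx, hxmin.1⟩, hleft ▸ hx, hxmin.2⟩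

lemma wedge_nonempty (G : StraightLineGraph V E) (he : e ∈ E) (hf : f ∈ E)
    (hleft : e.left = f.left) (hslope : e.slope < f.slope) : (wedge V e f).Nonempty := by
  have hlt {x : K} (hx : e.left.1 < x) : e.height x < f.height x :=
    (PlaneSegment.height_lt_height_iff_slope_lt_slope hleft hx).2 hslope
  have hef : e.left.1 < f.right.1 := hleft ▸ f.left_lt_right
  rcases le_total e.right.1 f.right.1 with h | h
  · exact ⟨e.right, Finset.mem_filter.2 ⟨G.right_mem e he, e.left_lt_right, le_rfl, h,
      e.height_right.le, e.height_right.symm.trans_le (hlt e.left_lt_right).le⟩⟩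
  · exact ⟨f.right, Finset.mem_filter.2 ⟨G.right_mem f hf, hef, h, le_rfl,
      (hlt hef).le.trans_eq f.height_right, f.height_right.ge⟩⟩

lemma exists_mem_wedge_forall_height_notMem (G : StraightLineGraph V E)
    (hE : (E : Set (PlaneSegment K)).Pairwise fun e f ↦ ¬ e.Crosses f) (he : e ∈ E) (hf : f ∈ E)
    (hleft : e.left = f.left) (hslope : e.slope < f.slope)
    (hnext : ∀ h ∈ E, h.left = e.left → h.slope ∉ Set.Ioo e.slope f.slope) :
    ∃ v ∈ wedge V e f, ∀ h ∈ E, v.1 ∈ h.openShadow →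
      h.height v.1 ∉ Set.Ioo (e.height v.1) (f.height v.1) := by
  obtain ⟨v, hv, hvmin⟩ := (wedge V e f).exists_min_image Prod.fst
    (G.wedge_nonempty he hf hleft hslope)
  refine ⟨v, hv, fun h hh hvh ⟨heh, hhf⟩ ↦ ?_⟩
  obtain ⟨-, hev, hve, hvf, -⟩ := Finset.mem_filter.1 hv
  -- Going left from `v`, the segment `h` stays between `e` and `f` as long as all three exist.
  have hbetween {x : K} (hhx : h.left.1 ≤ x) (hex : e.left.1 ≤ x) (hxv : x ≤ v.1) :
      h.height x ∈ Set.Icc (e.height x) (f.height x) := by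
    have hve' : v.1 ∈ e.shadow := ⟨hev.le, hve⟩
    have hvf' : v.1 ∈ f.shadow := ⟨hleft ▸ hev.le, hvf⟩
    have hvh' : v.1 ∈ h.shadow := Set.Ioo_subset_Icc_self hvh
    have hxe : x ∈ e.shadow := ⟨hex, hxv.trans hve⟩
    have hxf : x ∈ f.shadow := ⟨hleft ▸ hex, hxv.trans hvf⟩
    have hxh : x ∈ h.shadow := ⟨hhx, hxv.trans hvh.2.le⟩
    exact ⟨PlaneSegment.height_le_height_of_not_crosses
        (hE he hh (by rintro rfl; exact heh.false)) ⟨hve', hvh'⟩ ⟨hxe, hxh⟩ heh,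
      PlaneSegment.height_le_height_of_not_crosses
        (hE hh hf (by rintro rfl; exact hhf.false)) ⟨hvh', hvf'⟩ ⟨hxh, hxf⟩ hhf⟩
  rcases lt_trichotomy h.left.1 e.left.1 with hlt | heq | hgt
  · have hapex := hbetween hlt.le le_rfl hev.le
    have hfe : f.height e.left.1 = e.left.2 := hleft ▸ f.height_left
    rw [e.height_left, hfe, Set.Icc_self] at hapex
    exact G.height_ne h hh e.left (G.left_mem e he) ⟨hlt, hev.trans hvh.2⟩ hapex
  · have hhe := G.injOn_fst (G.left_mem h hh) (G.left_mem e he) heq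
    exact hnext h hh hhe
      ⟨(PlaneSegment.height_lt_height_iff_slope_lt_slope hhe.symm hev).1 heh,
        (PlaneSegment.height_lt_height_iff_slope_lt_slope (hhe.trans hleft) hvh.1).1 hhf⟩
  · have hmem : h.left ∈ wedge V e f := Finset.mem_filter.2 ⟨G.left_mem h hh, hgt,
      hvh.1.le.trans hve, hvh.1.le.trans hvf, h.height_left ▸ hbetween le_rfl hgt.le hvh.1.le⟩
    exact (hvmin _ hmem).not_gt hvh.1

lemma exists_isFirstBelow_or_isFirstAbove (G : StraightLineGraph V E)
    (hE : (E : Set (PlaneSegment K)).Pairwise fun e f ↦ ¬ e.Crosses f) (he : e ∈ E)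
    (htop : ∃ f ∈ E, e.left = f.left ∧ e.slope < f.slope) :
    (∃ v ∈ V, IsFirstBelow E e v) ∨ ∃ f ∈ E, e.left = f.left ∧ IsFirstAbove E f e.right := by
  classical
  obtain ⟨f, hf, hfmin⟩ := {f ∈ E | e.left = f.left ∧ e.slope < f.slope}.exists_min_image
    PlaneSegment.slope (by simpa only [Finset.filter_nonempty_iff] using htop)
  simp only [Finset.mem_filter] at hf hfmin
  obtain ⟨hf, hleft, hslope⟩ := hf
  obtain ⟨v, hv, hempty⟩ := G.exists_mem_wedge_forall_height_notMem hE he hf hleft hslope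
    fun h hh hhe hmem ↦ (hfmin h ⟨hh, hhe.symm, hmem.1⟩).not_gt hmem.2
  obtain ⟨hvV, hev, hve, hvf, hve₂, hvf₂⟩ := Finset.mem_filter.1 hv
  have hlt := (PlaneSegment.height_lt_height_iff_slope_lt_slope hleft hev).2 hslope
  rcases hve.lt_or_eq with hve | hve
  · exact .inl ⟨v, hvV, ⟨hev, hve⟩, hve₂.lt_of_ne (G.height_ne e he v hvV ⟨hev, hve⟩),
      fun h hh hvh hmem ↦ hempty h hh hvh ⟨hmem.1, hmem.2.trans_le hvf₂⟩⟩
  · obtain rfl := G.injOn_fst hvV (G.right_mem e he) hve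
    rw [e.height_right] at hlt hempty
    have hne : e.right.1 ≠ f.right.1 := fun h ↦ hlt.ne <| by
      rw [h, f.height_right, G.injOn_fst hvV (G.right_mem f hf) h]
    exact .inr ⟨f, hf, hleft, ⟨hleft ▸ hev, hvf.lt_of_ne hne⟩, hlt, hempty⟩

theorem card_le_three_mul_of_pairwise_not_crosses (G : StraightLineGraph V E)
    (hE : (E : Set (PlaneSegment K)).Pairwise fun e f ↦ ¬ e.Crosses f) : #E ≤ 3 * #V := by
  classical
  set top := {e ∈ E | ∀ f ∈ E, e.left = f.left → f.slope ≤ e.slope}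
  set below := {e ∈ E | ∃ v ∈ V, IsFirstBelow E e v}
  set short := {e ∈ E | ∃ f ∈ E, e.left = f.left ∧ IsFirstAbove E f e.right}
  have hcover : E ⊆ top ∪ (below ∪ short) := fun e he ↦ by
    simp only [top, below, short, Finset.mem_union, Finset.mem_filter, he, true_and]
    refine or_iff_not_imp_left.2 fun h ↦ G.exists_isFirstBelow_or_isFirstAbove hE he ?_
    push Not at h
    exact h
  have htop : #top ≤ #V := by
    refine Finset.card_le_card_of_injOn PlaneSegment.left
      (fun e he ↦ G.left_mem e (Finset.mem_filter.1 he).1) fun e he f hf h ↦ ?_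
    obtain ⟨he, hemax⟩ := Finset.mem_filter.1 he
    obtain ⟨hf, hfmax⟩ := Finset.mem_filter.1 hf
    exact G.eq_of_left_eq_of_slope_eq he hf h ((hfmax e he h.symm).antisymm (hemax f hf h))
  have hbelow : #below ≤ #V := by
    refine Finset.card_le_card_of_forall_subsingleton (IsFirstBelow E)
      (fun e he ↦ (Finset.mem_filter.1 he).2) fun v _ e he f hf ↦ ?_
    exact he.2.unique hE (Finset.mem_filter.1 he.1).1 (Finset.mem_filter.1 hf.1).1 hf.2
  have hshort : #short ≤ #V := by
    refine Finset.card_le_card_of_injOn PlaneSegment.right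
      (fun e he ↦ G.right_mem e (Finset.mem_filter.1 he).1) fun e he f hf h ↦ ?_
    obtain ⟨-, e', he', hee', hev⟩ := Finset.mem_filter.1 he
    obtain ⟨-, f', hf', hff', hfv⟩ := Finset.mem_filter.1 hf
    have h' : e' = f' := hev.unique hE he' hf' (h ▸ hfv)
    exact PlaneSegment.ext (hee'.trans (h' ▸ hff'.symm)) h
  have hsum := (Finset.card_le_card hcover).trans (Finset.card_union_le _ _)
  have hunion := Finset.card_union_le below short
  omega

lemma card_le_three_mul_add_card_crossings (G : StraightLineGraph V E) :
    #E ≤ 3 * #V + #(crossings E) := by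
  classical
  have hsub : E \ (crossings E).image Prod.fst ⊆ E := Finset.sdiff_subset
  have hplanar := (G.mono subset_rfl hsub fun e he ↦
      ⟨G.left_mem e (hsub he), G.right_mem e (hsub he)⟩).card_le_three_mul_of_pairwise_not_crosses
    fun e he f hf hne hcross ↦ (Finset.mem_sdiff.1 he).2 <|
      Finset.mem_image.2 ⟨(e, f), mem_crossings.2 ⟨hsub he, hsub hf, hne, hcross⟩, rfl⟩
  have hdel := Finset.le_card_sdiff ((crossings E).image Prod.fst) E
  have himage : #((crossings E).image Prod.fst) ≤ #(crossings E) := Finset.card_image_le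
  omega

lemma card_endpoints_eq_four (G : StraightLineGraph V E) (he : e ∈ E) (hf : f ∈ E) (hne : e ≠ f)
    (hcross : e.Crosses f) : #({e.left, e.right, f.left, f.right} : Finset (K × K)) = 4 := by
  obtain ⟨x, hx, hxeq⟩ := hcross
  have hdisj {y : K} (hy : y ≠ x) : e.height y ≠ f.height y := fun h ↦
    hne (G.eq_of_height_eq he hf (PlaneSegment.height_eq_of_eq_of_eq hy h hxeq) hx)
  have hlt {p q : K × K} (h : p.1 < q.1) : p ≠ q := fun hpq ↦ h.ne (congrArg Prod.fst hpq)
  have hll : e.left ≠ f.left := fun h ↦ hdisj hx.1.1.ne <| by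
    rw [e.height_left, h, f.height_left]
  have hrr : e.right ≠ f.right := fun h ↦ hdisj hx.1.2.ne' <| by
    rw [e.height_right, h, f.height_right]
  have hlr : e.left ≠ f.right := hlt (hx.1.1.trans hx.2.2)
  have hrl : e.right ≠ f.left := (hlt (hx.2.1.trans hx.1.2)).symm
  rw [Finset.card_insert_of_notMem (by simp [hlt e.left_lt_right, hll, hlr]),
    Finset.card_insert_of_notMem (by simp [hrl, hrr]), Finset.card_pair (hlt f.left_lt_right)]

lemma card_mul_sq_le (G : StraightLineGraph V E) {p : ℚ} (hp₀ : 0 ≤ p) (hp₁ : p ≤ 1) :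
    #E * p ^ 2 ≤ 3 * (#V * p) + #(crossings E) * p ^ 4 := by
  classical
  refine card_mul_pow_le_of_forall_subset (c := 3) hp₀ hp₁ (s := fun e ↦ {e.left, e.right})
    (t := fun z ↦ {z.1.left, z.1.right, z.2.left, z.2.right}) (fun e he ↦ ⟨?_, ?_⟩)
    (fun ⟨e, f⟩ hz ↦ ?_) fun S hS ↦ ?_
  · simp only [Finset.insert_subset_iff, Finset.singleton_subset_iff]
    exact ⟨G.left_mem e he, G.right_mem e he⟩
  · exact Finset.card_pair fun h ↦ e.left_lt_right.ne (congrArg Prod.fst h)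
  · obtain ⟨he, hf, hne, hcross⟩ := mem_crossings.1 hz
    simp only [Finset.insert_subset_iff, Finset.singleton_subset_iff]
    exact ⟨⟨G.left_mem e he, G.right_mem e he, G.left_mem f hf, G.right_mem f hf⟩,
      G.card_endpoints_eq_four he hf hne hcross⟩
  · simp only [Finset.insert_subset_iff, Finset.singleton_subset_iff]
    refine (G.mono (F := {e ∈ E | e.left ∈ S ∧ e.right ∈ S}) hS (Finset.filter_subset _ _)
      fun e he ↦ (Finset.mem_filter.1 he).2).card_le_three_mul_add_card_crossings.trans
      (Nat.add_le_add_left (Finset.card_le_card fun ⟨e, f⟩ hz ↦ ?_) _)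
    simp only [mem_crossings, Finset.mem_filter] at hz ⊢
    tauto

theorem crossing_lemma (G : StraightLineGraph V E) (hVE : 4 * #V ≤ #E) :
    #E ^ 3 ≤ 64 * #V ^ 2 * #(crossings E) := by
  rcases E.eq_empty_or_nonempty with rfl | hne
  · simp
  have hV : (0 : ℚ) < #V := by
    obtain ⟨e, he⟩ := hne
    exact_mod_cast Finset.card_pos.2 ⟨e.left, G.left_mem e he⟩
  have hE : (0 : ℚ) < #E := by exact_mod_cast hne.card_pos
  have hsample := G.card_mul_sq_le (p := 4 * #V / #E) (by positivity)
    ((div_le_one hE).2 (by exact_mod_cast hVE))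
  suffices (#E : ℚ) ^ 3 ≤ 64 * #V ^ 2 * #(crossings E) by exact_mod_cast this
  field_simp at hsample
  linarith

end StraightLineGraph

end StraightLineGraphs

section Lines

variable {K : Type*} [Field K]

/-- A line in the plane over `K`, as a set of points. Over `ℝ` this is `IsLine`. -/
def IsPlaneLine (l : Set (K × K)) : Prop :=
  ∃ a b c : K, (a, b) ≠ (0, 0) ∧ l = {p : K × K | a * p.1 + b * p.2 = c}

/-- The horizontal shear with parameter `t`. It is used to give the points of a finite set distinct
abscissae. -/
def shear (t : K) (p : K × K) : K × K := (p.1 + t * p.2, p.2)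

lemma shear_injective (t : K) : Function.Injective (shear t) := by
  rintro ⟨x, y⟩ ⟨x', y'⟩ h
  obtain ⟨hx, rfl⟩ := Prod.mk.inj h
  exact Prod.ext (add_right_cancel hx) rfl

lemma exists_injOn_fst_shear [Infinite K] (P : Finset (K × K)) :
    ∃ t : K, Set.InjOn (Prod.fst ∘ shear t) (P : Set (K × K)) := by
  classical
  obtain ⟨t, ht⟩ := Infinite.exists_notMem_finset
    ((P ×ˢ P).image fun z ↦ (z.1.1 - z.2.1) / (z.2.2 - z.1.2))
  refine ⟨t, fun p hp q hq hpq ↦ ?_⟩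
  have hfst : p.1 + t * p.2 = q.1 + t * q.2 := hpq
  by_cases hsnd : p.2 = q.2
  · rw [hsnd] at hfst
    exact Prod.ext (add_right_cancel hfst) hsnd
  · refine absurd (Finset.mem_image.2 ⟨(p, q), Finset.mk_mem_product hp hq, ?_⟩) ht
    rw [div_eq_iff (sub_ne_zero.2 (Ne.symm hsnd))]
    linear_combination hfst

lemma IsPlaneLine.shear_image {l : Set (K × K)} (hl : IsPlaneLine l) (t : K) :
    IsPlaneLine (shear t '' l) := by
  obtain ⟨a, b, c, hab, rfl⟩ := hl
  refine ⟨a, b - t * a, c, fun h ↦ hab ?_, ?_⟩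
  · obtain ⟨rfl, hb⟩ := Prod.mk.inj h
    rw [← hb, mul_zero, sub_zero]
  · ext ⟨x, y⟩
    constructor
    · rintro ⟨v, hv, hvx⟩
      obtain ⟨rfl, rfl⟩ := Prod.mk.inj hvx
      simp only [Set.mem_ofPred_eq] at hv ⊢
      linear_combination hv
    · intro h
      refine ⟨(x - t * y, y), ?_, by simp only [shear, sub_add_cancel]⟩
      simp only [Set.mem_ofPred_eq] at h ⊢
      linear_combination h

variable [LinearOrder K] [IsStrictOrderedRing K] {l : Set (K × K)} {e f : PlaneSegment K}

lemma IsPlaneLine.eq_setOf_height (hl : IsPlaneLine l) (hleft : e.left ∈ l)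
    (hright : e.right ∈ l) : l = {v | v.2 = e.height v.1} := by
  obtain ⟨a, b, c, hab, rfl⟩ := hl
  simp only [Set.mem_ofPred_eq] at hleft hright
  have hslope : b * e.slope = -a := by
    rw [PlaneSegment.slope, mul_div_assoc', div_eq_iff (sub_pos.2 e.left_lt_right).ne']
    linear_combination hright - hleft
  have hb : b ≠ 0 := by
    rintro rfl
    exact hab (by rw [← neg_eq_zero.1 (hslope.symm.trans (zero_mul _))])
  ext v
  have hheight : b * e.height v.1 = c - a * v.1 := by
    rw [PlaneSegment.height]
    linear_combination hleft + (v.1 - e.left.1) * hslope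
  simp only [Set.mem_ofPred_eq]
  rw [← mul_right_inj' hb (b := v.2), hheight, eq_sub_iff_add_eq']

lemma IsPlaneLine.height_eq_height (hl : IsPlaneLine l) (heleft : e.left ∈ l)
    (heright : e.right ∈ l) (hfleft : f.left ∈ l) (hfright : f.right ∈ l) :
    e.height = f.height := by
  have hgraph := (hl.eq_setOf_height heleft heright).symm.trans (hl.eq_setOf_height hfleft hfright)
  funext x
  exact (Set.ext_iff.1 hgraph (x, e.height x)).1 rfl

end Lines

section Incidences

open Classical in
/-- The incidences between a set of points and a family of sets of points. -/
noncomputable def incidences {α : Type*} (P : Finset α) (L : Finset (Set α)) :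
    Finset (α × Set α) :=
  {z ∈ P ×ˢ L | z.1 ∈ z.2}

lemma mem_incidences {α : Type*} {P : Finset α} {L : Finset (Set α)} {p : α} {l : Set α} :
    (p, l) ∈ incidences P L ↔ p ∈ P ∧ l ∈ L ∧ p ∈ l := by
  simp only [incidences, Finset.mem_filter, Finset.mem_product, and_assoc]

lemma card_incidences_le_card_incidences_image {α β : Type*} [DecidableEq β]
    [DecidableEq (Set β)] {f : α → β} (hf : Function.Injective f) (P : Finset α)
    (L : Finset (Set α)) :
    #(incidences P L) ≤ #(incidences (P.image f) (L.image (f '' ·))) := by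
  refine Finset.card_le_card_of_injOn (Prod.map f (f '' ·)) (fun ⟨p, l⟩ hz ↦ ?_)
    (hf.prodMap hf.image_injective).injOn
  obtain ⟨hp, hl, hpl⟩ := mem_incidences.1 hz
  exact mem_incidences.2
    ⟨Finset.mem_image_of_mem f hp, Finset.mem_image_of_mem _ hl, Set.mem_image_of_mem f hpl⟩

variable {K : Type*} [LinearOrder K] {P : Finset (K × K)} {L : Finset (Set (K × K))}

/-- `e` joins two points of `P` that are consecutive on the line `l`. -/
structure IsConsecutive (P : Finset (K × K)) (l : Set (K × K)) (e : PlaneSegment K) : Prop where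
  left_mem : e.left ∈ P
  right_mem : e.right ∈ P
  left_mem_line : e.left ∈ l
  right_mem_line : e.right ∈ l
  notMem_openShadow : ∀ v ∈ P, v ∈ l → v.1 ∉ e.openShadow

lemma exists_isConsecutive_left_eq {l : Set (K × K)} {p : K × K} (hp : p ∈ P) (hpl : p ∈ l)
    (hnext : ∃ q ∈ P, q ∈ l ∧ p.1 < q.1) : ∃ e, IsConsecutive P l e ∧ e.left = p := by
  classical
  obtain ⟨q, hq, hqmin⟩ := {q ∈ P | q ∈ l ∧ p.1 < q.1}.exists_min_image Prod.fst
    (by simpa only [Finset.filter_nonempty_iff] using hnext)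
  simp only [Finset.mem_filter] at hq hqmin
  exact ⟨⟨p, q, hq.2.2⟩, ⟨hp, hq.1, hpl, hq.2.1,
    fun v hv hvl hpvq ↦ (hqmin v ⟨hv, hvl, hpvq.1⟩).not_gt hpvq.2⟩, rfl⟩

lemma finite_setOf_isConsecutive (P : Finset (K × K)) (L : Finset (Set (K × K))) :
    {e : PlaneSegment K | ∃ l ∈ L, IsConsecutive P l e}.Finite := by
  refine ((P ×ˢ P).finite_toSet.preimage (f := fun e : PlaneSegment K ↦ (e.left, e.right))
    fun e _ f _ h ↦ PlaneSegment.ext (congrArg Prod.fst h) (congrArg Prod.snd h)).subset ?_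
  rintro e ⟨l, -, he⟩
  exact Finset.mem_coe.2 (Finset.mk_mem_product he.left_mem he.right_mem)

/-- The edges of Székely's graph: the segments between consecutive points of `P` on the lines
of `L`. -/
noncomputable def consecutiveSegments (P : Finset (K × K)) (L : Finset (Set (K × K))) :
    Finset (PlaneSegment K) :=
  (finite_setOf_isConsecutive P L).toFinset

lemma mem_consecutiveSegments {e : PlaneSegment K} :
    e ∈ consecutiveSegments P L ↔ ∃ l ∈ L, IsConsecutive P l e := by
  simp only [consecutiveSegments, Set.Finite.mem_toFinset, Set.mem_ofPred_eq]

variable [Field K] [IsStrictOrderedRing K]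

lemma straightLineGraph_consecutiveSegments (hP : Set.InjOn Prod.fst (P : Set (K × K)))
    (hL : ∀ l ∈ L, IsPlaneLine l) : StraightLineGraph P (consecutiveSegments P L) where
  injOn_fst := hP
  left_mem e he := by
    obtain ⟨l, -, he⟩ := mem_consecutiveSegments.1 he
    exact he.left_mem
  right_mem e he := by
    obtain ⟨l, -, he⟩ := mem_consecutiveSegments.1 he
    exact he.right_mem
  height_ne e he v hv hve hheight := by
    obtain ⟨l, hl, he⟩ := mem_consecutiveSegments.1 he
    have hgraph := (hL l hl).eq_setOf_height he.left_mem_line he.right_mem_line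
    exact he.notMem_openShadow v hv (hgraph.symm.subset hheight.symm) hve

lemma card_crossings_consecutiveSegments_le (hP : Set.InjOn Prod.fst (P : Set (K × K)))
    (hL : ∀ l ∈ L, IsPlaneLine l) : #(crossings (consecutiveSegments P L)) ≤ #L ^ 2 := by
  have G := straightLineGraph_consecutiveSegments hP hL
  rw [sq, ← Finset.card_product]
  refine Finset.card_le_card_of_forall_subsingleton
    (fun z w ↦ IsConsecutive P w.1 z.1 ∧ IsConsecutive P w.2 z.2) (fun ⟨e, f⟩ hz ↦ ?_) ?_
  · obtain ⟨he, hf, -⟩ := mem_crossings.1 hz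
    obtain ⟨l, hl, hel⟩ := mem_consecutiveSegments.1 he
    obtain ⟨m, hm, hfm⟩ := mem_consecutiveSegments.1 hf
    exact ⟨(l, m), Finset.mk_mem_product hl hm, hel, hfm⟩
  · rintro ⟨l, m⟩ hlm ⟨e, f⟩ ⟨hef, hel, hfm⟩ ⟨e', f'⟩ ⟨hef', hel', hfm'⟩
    obtain ⟨hl, hm⟩ := Finset.mem_product.1 hlm
    obtain ⟨he, hf, hne, x, hx, hxeq⟩ := mem_crossings.1 hef
    obtain ⟨he', hf', -, x', hx', hxeq'⟩ := mem_crossings.1 hef'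
    have hee' : e.height = e'.height := (hL l hl).height_eq_height
      hel.left_mem_line hel.right_mem_line hel'.left_mem_line hel'.right_mem_line
    have hff' : f.height = f'.height := (hL m hm).height_eq_height
      hfm.left_mem_line hfm.right_mem_line hfm'.left_mem_line hfm'.right_mem_line
    obtain rfl : x = x' := by
      by_contra hxx'
      rw [← hee', ← hff'] at hxeq'
      exact hne (G.eq_of_height_eq he hf
        (PlaneSegment.height_eq_of_eq_of_eq hxx' hxeq hxeq') hx)
    exact Prod.ext (G.eq_of_height_eq he he' hee' ⟨hx.1, hx'.1⟩)
      (G.eq_of_height_eq hf hf' hff' ⟨hx.2, hx'.2⟩)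

/-- An incidence `(p, l)` is charged to the segment of `l` starting at `p`, or to `l` itself if `p`
is the last point of `P` on `l`. -/
lemma card_incidences_le_card_consecutiveSegments_add
    (hP : Set.InjOn Prod.fst (P : Set (K × K))) (hL : ∀ l ∈ L, IsPlaneLine l) :
    #(incidences P L) ≤ #(consecutiveSegments P L) + #L := by
  classical
  rw [← Finset.card_filter_add_card_filter_not (s := incidences P L)
    fun z ↦ ∃ q ∈ P, q ∈ z.2 ∧ z.1.1 < q.1]
  refine Nat.add_le_add (Finset.card_le_card_of_forall_subsingleton
    (fun z e ↦ IsConsecutive P z.2 e ∧ e.left = z.1) (fun ⟨p, l⟩ hz ↦ ?_) ?_)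
    (Finset.card_le_card_of_injOn Prod.snd (fun ⟨p, l⟩ hz ↦ ?_) ?_)
  · obtain ⟨hpl, hnext⟩ := Finset.mem_filter.1 hz
    obtain ⟨hp, hl, hpl⟩ := mem_incidences.1 hpl
    obtain ⟨e, he, hep⟩ := exists_isConsecutive_left_eq hp hpl hnext
    exact ⟨e, mem_consecutiveSegments.2 ⟨l, hl, he⟩, he, hep⟩
  · rintro e - ⟨p, l⟩ ⟨hpl, hel, hep⟩ ⟨q, m⟩ ⟨hqm, hem, heq⟩
    have hl := hL l (mem_incidences.1 (Finset.mem_filter.1 hpl).1).2.1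
    have hm := hL m (mem_incidences.1 (Finset.mem_filter.1 hqm).1).2.1
    exact Prod.ext (hep.symm.trans heq)
      ((hl.eq_setOf_height hel.left_mem_line hel.right_mem_line).trans
        (hm.eq_setOf_height hem.left_mem_line hem.right_mem_line).symm)
  · exact (mem_incidences.1 (Finset.mem_filter.1 hz).1).2.1
  · rintro ⟨p, l⟩ hpl ⟨q, m⟩ hqm (rfl : l = m)
    obtain ⟨hpl, hplast⟩ := Finset.mem_filter.1 hpl
    obtain ⟨hql, hqlast⟩ := Finset.mem_filter.1 hqm
    obtain ⟨hp, -, hpl⟩ := mem_incidences.1 hpl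
    obtain ⟨hq, -, hql⟩ := mem_incidences.1 hql
    push Not at hplast hqlast
    rw [hP hp hq ((hqlast p hp hpl).antisymm (hplast q hq hql))]

lemma le_mul_rpow_of_pow_three_le {x a b : ℝ} (ha : 0 ≤ a) (hb : 0 ≤ b)
    (h : x ^ 3 ≤ 64 * a ^ 2 * b ^ 2) : x ≤ 4 * (a ^ (2 / 3 : ℝ) * b ^ (2 / 3 : ℝ)) := by
  have hcube {y : ℝ} (hy : 0 ≤ y) : (y ^ (2 / 3 : ℝ)) ^ 3 = y ^ 2 := by
    rw [← Real.rpow_mul_natCast hy]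
    norm_num
  refine le_of_pow_le_pow_left₀ three_ne_zero (by positivity) (h.trans_eq ?_)
  rw [mul_pow, mul_pow, hcube ha, hcube hb]
  ring

lemma card_consecutiveSegments_le (hP : Set.InjOn Prod.fst (P : Set (K × K)))
    (hL : ∀ l ∈ L, IsPlaneLine l) :
    (#(consecutiveSegments P L) : ℝ) ≤
      4 * ((#P : ℝ) ^ (2 / 3 : ℝ) * (#L : ℝ) ^ (2 / 3 : ℝ) + #P) := by
  rw [mul_add]
  rcases lt_or_ge #(consecutiveSegments P L) (4 * #P) with hfew | hmany
  · have hfew' : (#(consecutiveSegments P L) : ℝ) ≤ 4 * #P := by exact_mod_cast hfew.le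
    exact hfew'.trans (le_add_of_nonneg_left (by positivity))
  · have hcube : #(consecutiveSegments P L) ^ 3 ≤ 64 * #P ^ 2 * #L ^ 2 :=
      ((straightLineGraph_consecutiveSegments hP hL).crossing_lemma hmany).trans
        (Nat.mul_le_mul_left _ (card_crossings_consecutiveSegments_le hP hL))
    exact (le_mul_rpow_of_pow_three_le (by positivity) (by positivity)
      (by exact_mod_cast hcube)).trans (le_add_of_nonneg_right (by positivity))

lemma card_incidences_le_of_injOn_fst (hP : Set.InjOn Prod.fst (P : Set (K × K)))
    (hL : ∀ l ∈ L, IsPlaneLine l) :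
    (#(incidences P L) : ℝ) ≤
      4 * ((#P : ℝ) ^ (2 / 3 : ℝ) * (#L : ℝ) ^ (2 / 3 : ℝ) + #P + #L) := by
  have hincidences : (#(incidences P L) : ℝ) ≤ #(consecutiveSegments P L) + #L := by
    exact_mod_cast card_incidences_le_card_consecutiveSegments_add hP hL
  linarith [card_consecutiveSegments_le hP hL, Nat.cast_nonneg (α := ℝ) #L]

theorem szemeredi_trotter_general (P : Finset (K × K)) (L : Finset (Set (K × K)))
    (hL : ∀ l ∈ L, IsPlaneLine l) :
    ({q : (K × K) × Set (K × K) | q.1 ∈ P ∧ q.2 ∈ L ∧ q.1 ∈ q.2}.ncard : ℝ) ≤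
      4 * ((#P : ℝ) ^ (2 / 3 : ℝ) * (#L : ℝ) ^ (2 / 3 : ℝ) + #P + #L) := by
  classical
  have := CharZero.infinite K
  obtain ⟨t, ht⟩ := exists_injOn_fst_shear P
  have hincidences : {q : (K × K) × Set (K × K) | q.1 ∈ P ∧ q.2 ∈ L ∧ q.1 ∈ q.2} =
      incidences P L := Set.ext fun _ ↦ mem_incidences.symm
  have hsheared := card_incidences_le_of_injOn_fst (P := P.image (shear t))
    (L := L.image (shear t '' ·)) (by rw [Finset.coe_image]; exact ht.image_of_comp)
    (Finset.forall_mem_image.2 fun l hl ↦ (hL l hl).shear_image t)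
  rw [Finset.card_image_of_injective P (shear_injective t),
    Finset.card_image_of_injective L (shear_injective t).image_injective] at hsheared
  rw [hincidences, Set.ncard_coe_finset]
  exact le_trans
    (by exact_mod_cast card_incidences_le_card_incidences_image (shear_injective t) P L) hsheared

end Incidences

/-- **Szemerédi–Trotter theorem.** There is an absolute constant `C > 0` such that for
every finite set `P` of points and every finite set `L` of lines in the plane, the number
of incidences (pairs `(p, ℓ) ∈ P × L` with `p ∈ ℓ`) is at most
`C·(|P|^{2/3}·|L|^{2/3} + |P| + |L|)`. -/
theorem szemeredi_trotter :
    ∃ C : ℝ, 0 < C ∧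
      ∀ (P : Finset (ℝ × ℝ)) (L : Finset (Set (ℝ × ℝ))),
        (∀ l ∈ L, IsLine l) →
        (({q : (ℝ × ℝ) × Set (ℝ × ℝ) | q.1 ∈ P ∧ q.2 ∈ L ∧ q.1 ∈ q.2}.ncard : ℝ) ≤
          C * ((P.card : ℝ) ^ ((2 : ℝ) / 3) * (L.card : ℝ) ^ ((2 : ℝ) / 3)
            + (P.card : ℝ) + (L.card : ℝ))) :=
  ⟨4, four_pos, szemeredi_trotter_general⟩
end

section
/- Let N and r be positive integers with r² ≤ N. Consider the integer grid P = {(x, y) ∈ ℤ² : 0 ≤ x ≤ r−1 and 0 ≤ y < N/r} ⊆ ℝ². Then the lines y = m·x + b with integers 0 ≤ m ≤ ⌊N/(2r²)⌋ − 1 and 0 ≤ b ≤ ⌊N/(2r)⌋ − 1 are pairwise distinct, each contains at least r points of P, and hence P determines at least ⌊N/(2r²)⌋·⌊N/(2r)⌋ lines each containing at least r of its points. -/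
/-- The unbalanced integer grid `{(x, y) ∈ ℤ² : 0 ≤ x ≤ r - 1, 0 ≤ y < N/r} ⊆ ℝ²`. -/
def elekesGrid (N r : ℕ) : Set (ℝ × ℝ) :=
  {p | ∃ x y : ℤ, 0 ≤ x ∧ x ≤ (r : ℤ) - 1 ∧ 0 ≤ y ∧ (y : ℝ) < (N : ℝ) / r ∧
    p = ((x : ℝ), (y : ℝ))}

/-- The nonvertical line `y = m * x + b` in the coordinate plane over `R`, encoded as a set of
pairs; Elekes' family consists of such lines over `ℝ` with integer `m` and `b`. -/
def slopeLine {R : Type*} [Semiring R] (m b : R) : Set (R × R) :=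
  {p | p.2 = m * p.1 + b}

theorem slopeLine_inj {R : Type*} [Semiring R] [IsCancelAdd R] {m b m' b' : R} :
    slopeLine m b = slopeLine m' b' ↔ m = m' ∧ b = b' := by
  refine ⟨fun h => ?_, by rintro ⟨rfl, rfl⟩; rfl⟩
  have mem_right (x : R) : (x, m * x + b) ∈ slopeLine m' b' := h ▸ rfl
  have intercept_eq : b = b' := by simpa [slopeLine] using mem_right 0
  have slope_eq : m = m' := by simpa [slopeLine, intercept_eq] using mem_right 1
  exact ⟨slope_eq, intercept_eq⟩

theorem isLine_slopeLine (m b : ℝ) : IsLine (slopeLine m b) := by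
  refine ⟨-m, 1, b, by simp, Set.ext fun p => ?_⟩
  change p.2 = m * p.1 + b ↔ -m * p.1 + 1 * p.2 = b
  constructor <;> intro h <;> linarith

theorem card_le_ncard_inter_slopeLine {R : Type*} [Semiring R] {P : Set (R × R)} (hP : P.Finite)
    {m b : R} (X : Finset R) (hX : ∀ x ∈ X, (x, m * x + b) ∈ P) :
    X.card ≤ (P ∩ slopeLine m b).ncard := by
  rw [← Set.ncard_coe_finset]
  exact Set.ncard_le_ncard_of_injOn (fun x => (x, m * x + b)) (fun x hx => ⟨hX x hx, rfl⟩)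
    (fun _ _ _ _ h => congrArg Prod.fst h) (hP.inter_of_left _)

theorem exists_finset_isLine_card_eq {P : Set (ℝ × ℝ)} {r : ℕ} (M B : Finset ℝ)
    (hrich : ∀ m ∈ M, ∀ b ∈ B, r ≤ (P ∩ slopeLine m b).ncard) :
    ∃ S : Finset (Set (ℝ × ℝ)),
      (∀ L ∈ S, IsLine L ∧ r ≤ (P ∩ L).ncard) ∧ S.card = M.card * B.card := by
  classical
  refine ⟨(M ×ˢ B).image fun q => slopeLine q.1 q.2, ?_, ?_⟩
  · simp only [Finset.forall_mem_image, Finset.mem_product]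
    exact fun q hq => ⟨isLine_slopeLine q.1 q.2, hrich q.1 hq.1 q.2 hq.2⟩
  · rw [Finset.card_image_of_injective, Finset.card_product]
    exact fun q q' h => Prod.ext_iff.2 (slopeLine_inj.1 h)

theorem elekesGrid_finite (N r : ℕ) : (elekesGrid N r).Finite := by
  refine (((Set.finite_Icc (0 : ℤ) (r - 1)).prod (Set.finite_Ico (0 : ℤ) ⌈(N : ℝ) / r⌉)).image
    fun q => ((q.1 : ℝ), (q.2 : ℝ))).subset ?_
  rintro _ ⟨x, y, hx0, hxr, hy0, hyN, rfl⟩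
  exact ⟨(x, y), ⟨⟨hx0, hxr⟩, hy0, Int.lt_ceil.2 hyN⟩, rfl⟩

theorem mul_add_lt_div {K : Type*} [Field K] [LinearOrder K] [IsStrictOrderedRing K]
    {N r m b x : K} (hr : 0 < r) (hm0 : 0 ≤ m) (hm : m ≤ N / (2 * r ^ 2)) (hb : b < N / (2 * r))
    (hx : x ≤ r) : m * x + b < N / r :=
  calc
    m * x + b ≤ m * r + b := by gcongr
    _ < N / (2 * r ^ 2) * r + N / (2 * r) := add_lt_add_of_le_of_lt (by gcongr) hb
    _ = N / r := by field_simp; norm_num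

theorem intCast_lt_div_of_lt_natDiv {K : Type*} [Field K] [LinearOrder K] [IsStrictOrderedRing K]
    {N k : ℕ} {a : ℤ} (ha : a < ((N / k : ℕ) : ℤ)) : (a : K) < (N : K) / k :=
  calc
    (a : K) < ((N / k : ℕ) : K) := by rw [← Int.cast_natCast]; exact Int.cast_lt.2 ha
    _ ≤ (N : K) / k := Nat.cast_div_le

theorem le_ncard_elekesGrid_inter_slopeLine {N r : ℕ} {m b : ℤ} (hm0 : 0 ≤ m)
    (hm : m < ((N / (2 * r ^ 2) : ℕ) : ℤ)) (hb0 : 0 ≤ b) (hb : b < ((N / (2 * r) : ℕ) : ℤ)) :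
    r ≤ (elekesGrid N r ∩ slopeLine (m : ℝ) (b : ℝ)).ncard := by
  have slope_le : (m : ℝ) ≤ N / (2 * (r : ℝ) ^ 2) := by
    exact_mod_cast (intCast_lt_div_of_lt_natDiv (K := ℝ) hm).le
  have intercept_lt : (b : ℝ) < N / (2 * (r : ℝ)) := by
    exact_mod_cast intCast_lt_div_of_lt_natDiv (K := ℝ) hb
  suffices column_mem : ∀ x ∈ (Finset.range r).map Nat.castEmbedding,
      (x, (m : ℝ) * x + b) ∈ elekesGrid N r by
    simpa only [Finset.card_map, Finset.card_range] using
      card_le_ncard_inter_slopeLine (elekesGrid_finite N r) _ column_mem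
  simp only [Finset.forall_mem_map, Finset.mem_range, Nat.castEmbedding_apply]
  intro x hx
  have hr : (0 : ℝ) < r := by exact_mod_cast Nat.zero_lt_of_lt hx
  have height_lt : (m : ℝ) * x + b < N / r :=
    mul_add_lt_div hr (by exact_mod_cast hm0) slope_le intercept_lt (by exact_mod_cast hx.le)
  exact ⟨x, m * x + b, by positivity, by omega, by positivity, by exact_mod_cast height_lt,
    by push_cast; rfl⟩

/-- **Elekes' unbalanced grid construction.** Let `N, r` be positive integers with
`r² ≤ N` and let `P` be the grid `{(x, y) ∈ ℤ² : 0 ≤ x ≤ r-1, 0 ≤ y < N/r}`. The lines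
`y = m·x + b` with integers `0 ≤ m ≤ ⌊N/(2r²)⌋ - 1` and `0 ≤ b ≤ ⌊N/(2r)⌋ - 1` are
pairwise distinct, each contains at least `r` points of `P`, and hence `P` determines at
least `⌊N/(2r²)⌋·⌊N/(2r)⌋` lines each containing at least `r` of its points. -/
theorem elekes_construction (N r : ℕ) (hN : 0 < N) (hr : 0 < r) (hrN : r ^ 2 ≤ N) :
    (∀ m b m' b' : ℤ,
      {p : ℝ × ℝ | p.2 = (m : ℝ) * p.1 + (b : ℝ)} =
        {p : ℝ × ℝ | p.2 = (m' : ℝ) * p.1 + (b' : ℝ)} → m = m' ∧ b = b') ∧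
    (∀ m b : ℤ, 0 ≤ m → m ≤ ((N / (2 * r ^ 2) : ℕ) : ℤ) - 1 →
      0 ≤ b → b ≤ ((N / (2 * r) : ℕ) : ℤ) - 1 →
      r ≤ (elekesGrid N r ∩ {p : ℝ × ℝ | p.2 = (m : ℝ) * p.1 + (b : ℝ)}).ncard) ∧
    ∃ S : Finset (Set (ℝ × ℝ)),
      (∀ L ∈ S, IsLine L ∧ r ≤ (elekesGrid N r ∩ L).ncard) ∧
      (N / (2 * r ^ 2)) * (N / (2 * r)) ≤ S.card := by
  refine ⟨fun m b m' b' h => ?distinct, fun m b hm0 hm hb0 hb => ?rich, ?family⟩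
  case distinct => exact_mod_cast slopeLine_inj.1 h
  case rich => exact le_ncard_elekesGrid_inter_slopeLine hm0 (by omega) hb0 (by omega)
  case family =>
    have natCast_rich : ∀ m ∈ Finset.range (N / (2 * r ^ 2)), ∀ b ∈ Finset.range (N / (2 * r)),
        r ≤ (elekesGrid N r ∩ slopeLine (m : ℝ) (b : ℝ)).ncard := by
      intro m hm b hb
      exact_mod_cast le_ncard_elekesGrid_inter_slopeLine (m := m) (b := b) (by positivity)
        (by exact_mod_cast Finset.mem_range.1 hm) (by positivity)
        (by exact_mod_cast Finset.mem_range.1 hb)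
    obtain ⟨S, hS, hcard⟩ := exists_finset_isLine_card_eq
      ((Finset.range (N / (2 * r ^ 2))).map Nat.castEmbedding)
      ((Finset.range (N / (2 * r))).map Nat.castEmbedding)
      (by simpa only [Finset.forall_mem_map, Nat.castEmbedding_apply] using natCast_rich)
    simp only [Finset.card_map, Finset.card_range] at hcard
    exact ⟨S, hS, hcard.ge⟩
end

section
/- Let k ≥ 2 be a squarefree integer, so that Λ = (1, √k) is a nice basis of the real quadratic number field K = ℚ(√k) ⊆ ℝ. Then there exist constants c₁, c₂ > 0, depending only on k, such that for all positive integers N and r with r ≤ N^{1/2}, the point set A_r(Λ) × A_{N/r}(Λ) = {(a + b√k, c + d√k) : a, b, c, d ∈ ℤ, |a|, |b| ≤ r^{1/2}/2, |c|, |d| ≤ (N/r)^{1/2}/2} ⊆ ℝ² determines at least c₁·N²/r³ distinct lines in ℝ², each containing at least c₂·r of its points. -/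
/-- The quadratic grid `A_r(Λ) × A_{N/r}(Λ)` for `Λ = (1, √k)`:
`{(a + b√k, c + d√k) : a,b,c,d ∈ ℤ, |a|,|b| ≤ r^{1/2}/2, |c|,|d| ≤ (N/r)^{1/2}/2}`. -/
def quadGrid (k N r : ℕ) : Set (ℝ × ℝ) :=
  {p | ∃ a b c d : ℤ,
    |(a : ℝ)| ≤ Real.sqrt r / 2 ∧ |(b : ℝ)| ≤ Real.sqrt r / 2 ∧
    |(c : ℝ)| ≤ Real.sqrt ((N : ℝ) / r) / 2 ∧ |(d : ℝ)| ≤ Real.sqrt ((N : ℝ) / r) / 2 ∧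
    p = ((a : ℝ) + (b : ℝ) * Real.sqrt k, (c : ℝ) + (d : ℝ) * Real.sqrt k)}

open Finset

open scoped Zsqrtd

section CoordBox

lemma mem_Icc_neg_floor_floor {y : ℝ} {n : ℤ} : n ∈ Icc (-⌊y⌋) ⌊y⌋ ↔ |(n : ℝ)| ≤ y := by
  rw [mem_Icc, ← abs_le, Int.le_floor, Int.cast_abs]

lemma le_card_Icc_neg_floor_floor {y : ℝ} (hy : 0 ≤ y) : y ≤ #(Icc (-⌊y⌋) ⌊y⌋) := by
  have hfloor : 0 ≤ ⌊y⌋ := Int.floor_nonneg.mpr hy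
  have hcard : ⌊y⌋ + 1 ≤ (#(Icc (-⌊y⌋) ⌊y⌋) : ℤ) := by
    rw [Int.card_Icc_of_le _ _ (by omega)]
    omega
  calc y ≤ (⌊y⌋ + 1 : ℤ) := by exact_mod_cast (Int.lt_floor_add_one y).le
    _ ≤ #(Icc (-⌊y⌋) ⌊y⌋) := by exact_mod_cast hcard

/-- The elements `a + b√d` of `ℤ√d` with `|a|, |b| ≤ y`. In the notation of the paper,
`A_m(1, √d)` is the image in `ℝ` of the box with `y = m^{1/2}/2`. -/
noncomputable def coordBox (d : ℤ) (y : ℝ) : Finset (ℤ√d) :=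
  image₂ Zsqrtd.mk (Icc (-⌊y⌋) ⌊y⌋) (Icc (-⌊y⌋) ⌊y⌋)

variable {d : ℤ} {x y : ℝ} {z w : ℤ√d}

lemma mem_coordBox : z ∈ coordBox d y ↔ |(z.re : ℝ)| ≤ y ∧ |(z.im : ℝ)| ≤ y := by
  simp only [coordBox, mem_image₂, mem_Icc_neg_floor_floor]
  constructor
  · rintro ⟨a, ha, b, hb, rfl⟩
    exact ⟨ha, hb⟩
  · rintro ⟨hre, him⟩
    exact ⟨z.re, hre, z.im, him, rfl⟩

lemma sq_le_card_coordBox (d : ℤ) (hy : 0 ≤ y) : y ^ 2 ≤ #(coordBox d y) := by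
  have hmk : Function.Injective2 (Zsqrtd.mk (d := d)) := fun _ _ _ _ h => by
    simpa only [Zsqrtd.mk.injEq] using h
  rw [coordBox, card_image₂ hmk, Nat.cast_mul, sq]
  gcongr <;> exact le_card_Icc_neg_floor_floor hy

lemma add_mem_coordBox (hz : z ∈ coordBox d x) (hw : w ∈ coordBox d y) :
    z + w ∈ coordBox d (x + y) := by
  rw [mem_coordBox] at *
  simp only [Zsqrtd.re_add, Zsqrtd.im_add, Int.cast_add]
  exact ⟨(abs_add_le _ _).trans (add_le_add hz.1 hw.1),
    (abs_add_le _ _).trans (add_le_add hz.2 hw.2)⟩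

lemma mul_mem_coordBox (hd : d ≠ 0) (hz : z ∈ coordBox d x) (hw : w ∈ coordBox d y) :
    z * w ∈ coordBox d ((|(d : ℝ)| + 1) * (x * y)) := by
  rw [mem_coordBox] at *
  have hx : 0 ≤ x := (abs_nonneg _).trans hz.1
  have hy : 0 ≤ y := (abs_nonneg _).trans hw.1
  have hd_abs : 1 ≤ |(d : ℝ)| := by exact_mod_cast Int.one_le_abs hd
  simp only [Zsqrtd.re_mul, Zsqrtd.im_mul, Int.cast_add, Int.cast_mul]
  constructor
  · calc |(z.re : ℝ) * w.re + d * z.im * w.im|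
        ≤ |(z.re : ℝ)| * |(w.re : ℝ)| + |(d : ℝ)| * |(z.im : ℝ)| * |(w.im : ℝ)| := by
          simpa only [abs_mul] using abs_add_le ((z.re : ℝ) * w.re) (d * z.im * w.im)
      _ ≤ x * y + |(d : ℝ)| * x * y := by gcongr <;> tauto
      _ = (|(d : ℝ)| + 1) * (x * y) := by ring
  · calc |(z.re : ℝ) * w.im + z.im * w.re|
        ≤ |(z.re : ℝ)| * |(w.im : ℝ)| + |(z.im : ℝ)| * |(w.re : ℝ)| := by
          simpa only [abs_mul] using abs_add_le ((z.re : ℝ) * w.im) (z.im * w.re)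
      _ ≤ x * y + x * y := by gcongr <;> tauto
      _ = (1 + 1) * (x * y) := by ring
      _ ≤ (|(d : ℝ)| + 1) * (x * y) := by gcongr

end CoordBox

section Lines

/-- The line `y = s x + t` in the plane over `R`. -/
def graphLine {R : Type*} [Add R] [Mul R] (s t : R) : Set (R × R) :=
  {p | p.2 = s * p.1 + t}

lemma isLine_graphLine (s t : ℝ) : IsLine (graphLine s t) := by
  refine ⟨-s, 1, t, by simp, Set.ext fun p => ?_⟩
  change p.2 = s * p.1 + t ↔ -s * p.1 + 1 * p.2 = t
  constructor <;> intro h <;> linarith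

lemma graphLine_injective2 {R : Type*} [Ring R] :
    Function.Injective2 (graphLine : R → R → Set (R × R)) := by
  intro s s' t t' h
  have heval (x : R) : s * x + t = s' * x + t' := by
    have hmem : (x, s * x + t) ∈ graphLine s t := rfl
    rwa [h] at hmem
  have ht : t = t' := by simpa using heval 0
  subst ht
  exact ⟨by simpa using heval 1, rfl⟩

variable {d : ℤ} {X Z W : ℝ}

lemma card_coordBox_le_ncard_inter_graphLine {R : Type*} [Ring R] {φ : ℤ√d →+* R}
    (hφ : Function.Injective φ) (hd : d ≠ 0) {s t : ℤ√d}
    (hs : s ∈ coordBox d Z) (ht : t ∈ coordBox d W) :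
    #(coordBox d X) ≤ (((φ '' coordBox d X) ×ˢ
      (φ '' coordBox d ((|(d : ℝ)| + 1) * (Z * X) + W))) ∩ graphLine (φ s) (φ t)).ncard := by
  rw [← Set.ncard_coe_finset]
  refine Set.ncard_le_ncard_of_injOn (fun x => (φ x, φ (s * x + t))) (fun x hx => ?_)
    (fun x _ y _ hxy => hφ (congrArg Prod.fst hxy))
    ((((finite_toSet _).image φ).prod ((finite_toSet _).image φ)).inter_of_left _)
  have hsxt := add_mem_coordBox (mul_mem_coordBox hd hs hx) ht
  exact ⟨⟨Set.mem_image_of_mem φ hx, Set.mem_image_of_mem φ hsxt⟩,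
    by simp only [graphLine, Set.mem_ofPred_eq, map_add, map_mul]⟩

lemma exists_rich_lines_of_injective {φ : ℤ√d →+* ℝ} (hφ : Function.Injective φ) (hd : d ≠ 0)
    (hX : 0 ≤ X) (hZ : 0 ≤ Z) (hW : 0 ≤ W) :
    ∃ S : Finset (Set (ℝ × ℝ)),
      (∀ L ∈ S, IsLine L ∧ X ^ 2 ≤ (((φ '' coordBox d X) ×ˢ
        (φ '' coordBox d ((|(d : ℝ)| + 1) * (Z * X) + W))) ∩ L).ncard) ∧
      Z ^ 2 * W ^ 2 ≤ #S := by
  classical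
  refine ⟨image₂ (fun s t => graphLine (φ s) (φ t)) (coordBox d Z) (coordBox d W), ?_, ?_⟩
  · intro L hL
    obtain ⟨s, hs, t, ht, rfl⟩ := mem_image₂.mp hL
    refine ⟨isLine_graphLine _ _, (sq_le_card_coordBox d hX).trans ?_⟩
    exact_mod_cast card_coordBox_le_ncard_inter_graphLine hφ hd hs ht
  · have hinj : Function.Injective2 fun s t => graphLine (φ s) (φ t) := by
      intro s s' t t' h
      obtain ⟨hs, ht⟩ := graphLine_injective2 h
      exact ⟨hφ hs, hφ ht⟩
    rw [card_image₂ hinj, Nat.cast_mul]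
    gcongr <;> exact sq_le_card_coordBox d ‹_›

end Lines

lemma quadGrid_eq_image_prod_image (k N r : ℕ) :
    quadGrid k N r =
      (Zsqrtd.toReal (Int.natCast_nonneg k) '' coordBox k (√r / 2)) ×ˢ
        (Zsqrtd.toReal (Int.natCast_nonneg k) '' coordBox k (√(N / r) / 2)) := by
  ext p
  simp only [quadGrid, Set.mem_ofPred_eq, Set.mem_prod, Set.mem_image, SetLike.mem_coe,
    mem_coordBox, Zsqrtd.toReal_apply, Int.cast_natCast]
  constructor
  · rintro ⟨a, b, c, d, ha, hb, hc, hd, rfl⟩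
    exact ⟨⟨⟨a, b⟩, ⟨ha, hb⟩, rfl⟩, ⟨c, d⟩, ⟨hc, hd⟩, rfl⟩
  · rintro ⟨⟨z, ⟨ha, hb⟩, hz⟩, w, ⟨hc, hd⟩, hw⟩
    exact ⟨z.re, z.im, w.re, w.im, ha, hb, hc, hd, Prod.ext hz.symm hw.symm⟩

theorem quadratic_field_construction_general {k : ℕ} (hk : ¬IsSquare k) (N : ℕ) {r : ℕ}
    (hr : 0 < r) :
    ∃ S : Finset (Set (ℝ × ℝ)),
      (∀ L ∈ S, IsLine L ∧ 1 / 4 * (r : ℝ) ≤ (quadGrid k N r ∩ L).ncard) ∧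
      1 / (64 * ((k : ℝ) + 1) ^ 2) * (N : ℝ) ^ 2 / (r : ℝ) ^ 3 ≤ #S := by
  have hk_int : ¬IsSquare (k : ℤ) := by rwa [Int.isSquare_natCast_iff]
  have hφ : Function.Injective (Zsqrtd.toReal (Int.natCast_nonneg k)) :=
    Zsqrtd.toReal_injective _ fun n hn => hk_int ⟨n, hn⟩
  have hk₀ : (k : ℤ) ≠ 0 := fun h => hk_int (h ▸ IsSquare.zero)
  have : (0 : ℝ) < r := mod_cast hr
  set X : ℝ := √r / 2 with hX
  set Y : ℝ := √(N / r) / 2 with hY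
  have hX_pos : 0 < X := by positivity
  have hX_sq : X ^ 2 = r / 4 := by rw [hX, div_pow, Real.sq_sqrt (by positivity)]; norm_num
  have hY_sq : Y ^ 2 = N / r / 4 := by rw [hY, div_pow, Real.sq_sqrt (by positivity)]; norm_num
  obtain ⟨S, hS, hcard⟩ := exists_rich_lines_of_injective (Z := Y / (2 * (k + 1) * X))
    (W := Y / 2) hφ hk₀ hX_pos.le (by positivity) (by positivity)
  have hheight : (|((k : ℤ) : ℝ)| + 1) * (Y / (2 * (k + 1) * X) * X) + Y / 2 = Y := by
    rw [Int.cast_natCast, Nat.abs_cast]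
    field_simp
    ring
  rw [hheight, ← quadGrid_eq_image_prod_image, hX_sq] at hS
  refine ⟨S, fun L hL => ⟨(hS L hL).1, ?_⟩, ?_⟩
  · linarith [(hS L hL).2]
  · calc 1 / (64 * ((k : ℝ) + 1) ^ 2) * (N : ℝ) ^ 2 / (r : ℝ) ^ 3
        = Y ^ 2 / (2 ^ 2 * (k + 1) ^ 2 * X ^ 2) * (Y ^ 2 / 2 ^ 2) := by
          rw [hX_sq, hY_sq]; field_simp; ring
      _ = (Y / (2 * (k + 1) * X)) ^ 2 * (Y / 2) ^ 2 := by simp only [div_pow, mul_pow]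
      _ ≤ #S := hcard

/-- **The quadratic-field instance of the main theorem.** Let `k ≥ 2` be a squarefree
integer. Then there are constants `c₁, c₂ > 0`, depending only on `k`, such that for all
positive integers `N, r` with `r ≤ N^{1/2}`, the point set
`{(a + b√k, c + d√k) : |a|,|b| ≤ r^{1/2}/2, |c|,|d| ≤ (N/r)^{1/2}/2} ⊆ ℝ²` determines at
least `c₁·N²/r³` distinct lines in `ℝ²`, each containing at least `c₂·r` of its
points. -/
theorem quadratic_field_construction (k : ℕ) (hk : 2 ≤ k) (hsf : Squarefree k) :
    ∃ c₁ c₂ : ℝ, 0 < c₁ ∧ 0 < c₂ ∧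
      ∀ N r : ℕ, 0 < N → 0 < r → (r : ℝ) ≤ Real.sqrt N →
        ∃ S : Finset (Set (ℝ × ℝ)),
          (∀ L ∈ S, IsLine L ∧ c₂ * r ≤ ((quadGrid k N r) ∩ L).ncard) ∧
          c₁ * (N : ℝ) ^ 2 / (r : ℝ) ^ 3 ≤ S.card := by
  have hk_sq : ¬IsSquare k := by
    rintro ⟨m, rfl⟩
    obtain rfl : m = 1 := Nat.isUnit_iff.mp (hsf m dvd_rfl)
    omega
  exact ⟨1 / (64 * ((k : ℝ) + 1) ^ 2), 1 / 4, by positivity, by norm_num,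
    fun N r _ hr _ => quadratic_field_construction_general hk_sq N hr⟩
end
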